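/- Let (η, α, U, A, φ, σ) be a solution of the Gowdy symmetric IIA system on (T₋,T₊) with 0 < T₋ < t_i < T₊ < ∞. Define the second-order energy density 𝓔̃ := Ü² + αU̇'² + (e^{4U}/(4t²))(Ä² + αȦ'²) + (1/4)[φ̈² + αφ̇'² + e^{2λφ}(σ̈² + ασ̇'²)]. If the functions η, α, U, A, φ, σ and all their first partial derivatives, as well as α̇' and α̈, are bounded on (T₋,T₊) × S¹, then 𝓔̃ is bounded on (T₋,T₊) × S¹. -/

import Mathlib

/-!
The second time derivatives and mixed derivatives of the fields `f ∈ {U, A, φ, σ}` are controlled by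
a light cone argument applied to the time-differentiated evolution equations.

*Lower bound for `α`.* The equation for `α` gives `(α⁻¹)˙ = tQ²e^{2λφ+2(η-U)}`, which is bounded, so
`α⁻¹` is bounded (`GowdySolution.inv_alpha_bd`).

*Differentiated system.* Each evolution equation reads `f̈ - αf'' = F` with `F` built from bounded
first-order quantities. The time derivative of `F` is affine in the second derivatives `f̈`, `ḟ'`
with bounded coefficients, because `α̇'` and `α̈` are bounded; the predicate `Good` records this.
Hence `v = ḟ` satisfies `v̈ - αv'' = Ḟ + α̇f''` with `f'' = (f̈ - F)/α`, again affine in the second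
derivatives.

*Characteristic derivatives.* With `c = √α`, the functions `w = v̇ ± cv'` satisfy transport equations
`ẇ ∓ cw' = O(1 + max |w|)`, and they control `v̇` and `v'` since `c⁻¹` is bounded
(`wave_second_order`).

*Maximum principle.* Instead of integrating along characteristics, one looks at a maximum of
`w² e^{-k|t - t_i|}` over all the `w`'s on a compact time interval: there `w w' = 0`, so the
transport term disappears, and for large `k` the inequality for the time derivative forces `w² ≤ 1`
unless the maximum is at `t = t_i` (`transport_forward`, `transport_bounded`).
-/

noncomputable section

open Real Set MeasureTheory Filter

/-- Partial derivative in the first (time) variable. -/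
def pt (f : ℝ → ℝ → ℝ) : ℝ → ℝ → ℝ := fun t θ => deriv (fun s => f s θ) t

/-- Partial derivative in the second (angle) variable. -/
def pth (f : ℝ → ℝ → ℝ) : ℝ → ℝ → ℝ := fun t θ => deriv (fun x => f t x) θ

/-- The full Gowdy symmetric IIA system (both constraints, the equation for `α`,
and the four evolution equations) holding at all times in `S` (dot = `pt`,
prime = `pth`). -/
structure IsGowdyIIA (Q lam : ℝ) (S : Set ℝ) (η α U A φ σ : ℝ → ℝ → ℝ) : Prop where
  alpha_pos : ∀ t ∈ S, ∀ θ : ℝ, 0 < α t θ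
  constraint_t : ∀ t ∈ S, ∀ θ : ℝ,
    pt η t θ / t =
      (pt U t θ) ^ 2 + α t θ * (pth U t θ) ^ 2
      + exp (4 * U t θ) / (4 * t ^ 2) * ((pt A t θ) ^ 2 + α t θ * (pth A t θ) ^ 2)
      + (1 / 4) * ((pt φ t θ) ^ 2 + α t θ * (pth φ t θ) ^ 2
          + exp (2 * lam * φ t θ) * ((pt σ t θ) ^ 2 + α t θ * (pth σ t θ) ^ 2)
          + α t θ * Q ^ 2 * exp (2 * lam * φ t θ + 2 * (η t θ - U t θ)))
  constraint_θ : ∀ t ∈ S, ∀ θ : ℝ,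
    pth η t θ / t =
      2 * pt U t θ * pth U t θ
      + exp (4 * U t θ) / (2 * t ^ 2) * (pt A t θ * pth A t θ)
      - pth α t θ / (2 * t * α t θ)
      + (1 / 2) * (pt φ t θ * pth φ t θ
          + exp (2 * lam * φ t θ) * (pt σ t θ * pth σ t θ))
  constraint_α : ∀ t ∈ S, ∀ θ : ℝ,
    pt α t θ = - t * (α t θ) ^ 2 * Q ^ 2 * exp (2 * lam * φ t θ + 2 * (η t θ - U t θ))
  evol_U : ∀ t ∈ S, ∀ θ : ℝ,
    pt (pt U) t θ - α t θ * pth (pth U) t θ =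
      - pt U t θ / t + pt α t θ * pt U t θ / (2 * α t θ) + pth α t θ * pth U t θ / 2
      + exp (4 * U t θ) / (2 * t ^ 2) * ((pt A t θ) ^ 2 - α t θ * (pth A t θ) ^ 2)
      + (1 / 4) * α t θ * Q ^ 2 * exp (2 * lam * φ t θ + 2 * (η t θ - U t θ))
  evol_A : ∀ t ∈ S, ∀ θ : ℝ,
    pt (pt A) t θ - α t θ * pth (pth A) t θ =
      pt A t θ / t + pt α t θ * pt A t θ / (2 * α t θ) + pth α t θ * pth A t θ / 2
      - 4 * (pt A t θ * pt U t θ - α t θ * pth A t θ * pth U t θ)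
  evol_φ : ∀ t ∈ S, ∀ θ : ℝ,
    pt (pt φ) t θ - α t θ * pth (pth φ) t θ =
      - pt φ t θ / t + pt α t θ * pt φ t θ / (2 * α t θ) + pth α t θ * pth φ t θ / 2
      + lam * exp (2 * lam * φ t θ) * ((pt σ t θ) ^ 2 - α t θ * (pth σ t θ) ^ 2)
      - lam * α t θ * Q ^ 2 * exp (2 * lam * φ t θ + 2 * (η t θ - U t θ))
  evol_σ : ∀ t ∈ S, ∀ θ : ℝ,
    pt (pt σ) t θ - α t θ * pth (pth σ) t θ =
      - pt σ t θ / t + pt α t θ * pt σ t θ / (2 * α t θ) + pth α t θ * pth σ t θ / 2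
      - 2 * lam * (pt φ t θ * pt σ t θ - α t θ * pth φ t θ * pth σ t θ)

/-- A smooth, spatially `2π`-periodic solution of the Gowdy symmetric IIA system
on the areal time interval `(Tm, Tp)`. -/
structure GowdySolution (Q lam Tm Tp : ℝ) where
  η : ℝ → ℝ → ℝ
  α : ℝ → ℝ → ℝ
  U : ℝ → ℝ → ℝ
  A : ℝ → ℝ → ℝ
  φ : ℝ → ℝ → ℝ
  σ : ℝ → ℝ → ℝ
  smooth : ∀ f ∈ ([η, α, U, A, φ, σ] : List (ℝ → ℝ → ℝ)),
    ContDiffOn ℝ (⊤ : ℕ∞) (fun p : ℝ × ℝ => f p.1 p.2) (Ioo Tm Tp ×ˢ (univ : Set ℝ))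
  periodic : ∀ f ∈ ([η, α, U, A, φ, σ] : List (ℝ → ℝ → ℝ)), ∀ t θ : ℝ,
    f t (θ + 2 * π) = f t θ
  sys : IsGowdyIIA Q lam (Ioo Tm Tp) η α U A φ σ

/-- The energy density `𝓔`. -/
def calE (lam : ℝ) (α U A φ σ : ℝ → ℝ → ℝ) (t θ : ℝ) : ℝ :=
  (pt U t θ) ^ 2 + α t θ * (pth U t θ) ^ 2
  + exp (4 * U t θ) / (4 * t ^ 2) * ((pt A t θ) ^ 2 + α t θ * (pth A t θ) ^ 2)
  + (1 / 4) * ((pt φ t θ) ^ 2 + α t θ * (pth φ t θ) ^ 2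
      + exp (2 * lam * φ t θ) * ((pt σ t θ) ^ 2 + α t θ * (pth σ t θ) ^ 2))

/-- The energy `E(t)` (integral over the circle `S¹ = [0, 2π]`). -/
def energyE (Q lam : ℝ) (η α U A φ σ : ℝ → ℝ → ℝ) (t : ℝ) : ℝ :=
  ∫ θ in Ioc (0 : ℝ) (2 * π),
    (1 / Real.sqrt (α t θ)) *
      (calE lam α U A φ σ t θ
        + (1 / 4) * α t θ * Q ^ 2 * exp (2 * (η t θ + lam * φ t θ - U t θ)))

/-- The energy `Ẽ(t)`. -/
def energyEt (lam : ℝ) (α U A φ σ : ℝ → ℝ → ℝ) (t : ℝ) : ℝ :=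
  ∫ θ in Ioc (0 : ℝ) (2 * π), calE lam α U A φ σ t θ / Real.sqrt (α t θ)

/-- The timelike convergence condition (TCC) for the Gowdy symmetric IIA system. -/
def TCC (Q lam Tm Tp : ℝ) (η α U φ σ : ℝ → ℝ → ℝ) : Prop :=
  ∀ t ∈ Ioo Tm Tp, ∀ θ : ℝ,
    (pt φ t θ) ^ 2 + exp (2 * lam * φ t θ) * (pt σ t θ) ^ 2
      ≥ (1 / 2) * α t θ * Q ^ 2 * exp (2 * (η t θ + lam * φ t θ - U t θ))

/-- The second-order energy density `𝓔̃`. -/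
def calE2 (lam : ℝ) (α U A φ σ : ℝ → ℝ → ℝ) (t θ : ℝ) : ℝ :=
  (pt (pt U) t θ) ^ 2 + α t θ * (pth (pt U) t θ) ^ 2
  + exp (4 * U t θ) / (4 * t ^ 2) *
      ((pt (pt A) t θ) ^ 2 + α t θ * (pth (pt A) t θ) ^ 2)
  + (1 / 4) * ((pt (pt φ) t θ) ^ 2 + α t θ * (pth (pt φ) t θ) ^ 2
      + exp (2 * lam * φ t θ) *
          ((pt (pt σ) t θ) ^ 2 + α t θ * (pth (pt σ) t θ) ^ 2))

/-! ### Smooth functions on the strip and their partial derivatives -/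

/-- Joint smoothness on the strip `(Tm, Tp) × ℝ`. -/
def SmoothStrip (Tm Tp : ℝ) (f : ℝ → ℝ → ℝ) : Prop :=
  ContDiffOn ℝ (⊤ : ℕ∞) (fun p : ℝ × ℝ => f p.1 p.2) (Ioo Tm Tp ×ˢ (univ : Set ℝ))

lemma isOpen_strip (Tm Tp : ℝ) : IsOpen (Ioo Tm Tp ×ˢ (univ : Set ℝ)) :=
  isOpen_Ioo.prod isOpen_univ

namespace SmoothStrip

variable {Tm Tp t θ : ℝ} {f g : ℝ → ℝ → ℝ}

lemma contDiffAt (hf : SmoothStrip Tm Tp f) (ht : t ∈ Ioo Tm Tp) :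
    ContDiffAt ℝ (⊤ : ℕ∞) (fun p : ℝ × ℝ => f p.1 p.2) (t, θ) :=
  ContDiffOn.contDiffAt hf ((isOpen_strip Tm Tp).mem_nhds ⟨ht, mem_univ _⟩)

lemma hasFDerivAt (hf : SmoothStrip Tm Tp f) (ht : t ∈ Ioo Tm Tp) :
    HasFDerivAt (fun p : ℝ × ℝ => f p.1 p.2)
      (fderiv ℝ (fun p : ℝ × ℝ => f p.1 p.2) (t, θ)) (t, θ) :=
  ((hf.contDiffAt ht).differentiableAt (by simp)).hasFDerivAt

lemma hasDerivAt_fst (hf : SmoothStrip Tm Tp f) (ht : t ∈ Ioo Tm Tp) :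
    HasDerivAt (fun s => f s θ) (fderiv ℝ (fun p : ℝ × ℝ => f p.1 p.2) (t, θ) (1, 0)) t :=
  HasFDerivAt.comp_hasDerivAt (f := fun s : ℝ => (s, θ)) t (hf.hasFDerivAt ht)
    ((hasDerivAt_id t).prodMk (hasDerivAt_const t θ))

lemma hasDerivAt_snd (hf : SmoothStrip Tm Tp f) (ht : t ∈ Ioo Tm Tp) :
    HasDerivAt (fun x => f t x) (fderiv ℝ (fun p : ℝ × ℝ => f p.1 p.2) (t, θ) (0, 1)) θ :=
  HasFDerivAt.comp_hasDerivAt (f := fun x : ℝ => (t, x)) θ (hf.hasFDerivAt ht)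
    ((hasDerivAt_const θ t).prodMk (hasDerivAt_id θ))

lemma pt_eq (hf : SmoothStrip Tm Tp f) (ht : t ∈ Ioo Tm Tp) :
    pt f t θ = fderiv ℝ (fun p : ℝ × ℝ => f p.1 p.2) (t, θ) (1, 0) :=
  (hf.hasDerivAt_fst ht).deriv

lemma pth_eq (hf : SmoothStrip Tm Tp f) (ht : t ∈ Ioo Tm Tp) :
    pth f t θ = fderiv ℝ (fun p : ℝ × ℝ => f p.1 p.2) (t, θ) (0, 1) :=
  (hf.hasDerivAt_snd ht).deriv

lemma hasDerivAt_pt (hf : SmoothStrip Tm Tp f) (ht : t ∈ Ioo Tm Tp) (θ : ℝ) :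
    HasDerivAt (fun s => f s θ) (pt f t θ) t := by
  rw [hf.pt_eq ht]; exact hf.hasDerivAt_fst ht

lemma hasDerivAt_pth (hf : SmoothStrip Tm Tp f) (ht : t ∈ Ioo Tm Tp) (θ : ℝ) :
    HasDerivAt (fun x => f t x) (pth f t θ) θ := by
  rw [hf.pth_eq ht]; exact hf.hasDerivAt_snd ht

lemma contDiffOn_fderiv (hf : SmoothStrip Tm Tp f) (v : ℝ × ℝ) :
    ContDiffOn ℝ (⊤ : ℕ∞) (fun p => fderiv ℝ (fun p : ℝ × ℝ => f p.1 p.2) p v)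
      (Ioo Tm Tp ×ˢ (univ : Set ℝ)) :=
  (ContDiffOn.fderiv_of_isOpen hf (isOpen_strip Tm Tp) (by simp)).clm_apply contDiffOn_const

lemma pt (hf : SmoothStrip Tm Tp f) : SmoothStrip Tm Tp (pt f) :=
  (hf.contDiffOn_fderiv (1, 0)).congr fun _ hp => hf.pt_eq hp.1

lemma pth (hf : SmoothStrip Tm Tp f) : SmoothStrip Tm Tp (pth f) :=
  (hf.contDiffOn_fderiv (0, 1)).congr fun _ hp => hf.pth_eq hp.1

/-- Mixed partial derivatives commute. -/
lemma pt_pth (hf : SmoothStrip Tm Tp f) (ht : t ∈ Ioo Tm Tp) (θ : ℝ) :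
    _root_.pt (_root_.pth f) t θ = _root_.pth (_root_.pt f) t θ := by
  set F : ℝ × ℝ → ℝ := fun p => f p.1 p.2 with hF
  have hmem : Ioo Tm Tp ×ˢ (univ : Set ℝ) ∈ nhds (t, θ) :=
    (isOpen_strip Tm Tp).mem_nhds ⟨ht, mem_univ _⟩
  have key : ∀ (u v : ℝ × ℝ), fderiv ℝ (fun p => fderiv ℝ F p v) (t, θ) u
      = fderiv ℝ (fderiv ℝ F) (t, θ) u v := by
    intro u v
    have hd : DifferentiableAt ℝ (fderiv ℝ F) (t, θ) :=
      ((ContDiffOn.fderiv_of_isOpen (m := 1) hf (isOpen_strip Tm Tp)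
        (by norm_cast)).contDiffAt hmem).differentiableAt (by simp)
    have := (hd.hasFDerivAt.clm_apply (hasFDerivAt_const v (t, θ))).fderiv
    rw [this]; simp
  have hsymm : IsSymmSndFDerivAt ℝ F (t, θ) :=
    (hf.contDiffAt ht).isSymmSndFDerivAt (by simp; norm_cast)
  rw [hf.pth.pt_eq ht, hf.pt.pth_eq ht]
  have e1 : (fun p : ℝ × ℝ => _root_.pth f p.1 p.2) =ᶠ[nhds (t, θ)]
      fun p => fderiv ℝ F p (0, 1) := by
    filter_upwards [hmem] with p hp using hf.pth_eq hp.1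
  have e2 : (fun p : ℝ × ℝ => _root_.pt f p.1 p.2) =ᶠ[nhds (t, θ)]
      fun p => fderiv ℝ F p (1, 0) := by
    filter_upwards [hmem] with p hp using hf.pt_eq hp.1
  rw [e1.fderiv_eq, e2.fderiv_eq, key, key]
  exact hsymm _ _

lemma pt_pth_pth (hf : SmoothStrip Tm Tp f) (ht : t ∈ Ioo Tm Tp) (θ : ℝ) :
    _root_.pt (_root_.pth (_root_.pth f)) t θ = _root_.pth (_root_.pth (_root_.pt f)) t θ := by
  rw [hf.pth.pt_pth ht]
  have : (fun x => _root_.pt (_root_.pth f) t x) = fun x => _root_.pth (_root_.pt f) t x :=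
    funext fun x => hf.pt_pth ht x
  change deriv (fun x => _root_.pt (_root_.pth f) t x) θ = _
  rw [this]; rfl

lemma continuous_slice (hf : SmoothStrip Tm Tp f) (ht : t ∈ Ioo Tm Tp) :
    Continuous (fun x => f t x) :=
  continuous_iff_continuousAt.2 fun x => (hf.hasDerivAt_pth ht x).continuousAt

end SmoothStrip

lemma pt_periodic {f : ℝ → ℝ → ℝ} (hf : ∀ t θ : ℝ, f t (θ + 2 * π) = f t θ) (t θ : ℝ) :
    pt f t (θ + 2 * π) = pt f t θ := by
  simp only [pt, hf]

lemma pth_periodic {f : ℝ → ℝ → ℝ} (hf : ∀ t θ : ℝ, f t (θ + 2 * π) = f t θ) (t θ : ℝ) :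
    pth f t (θ + 2 * π) = pth f t θ := by
  simp only [pth]
  rw [← deriv_comp_add_const]
  simp only [hf]

lemma exists_bound_of_periodic {f : ℝ → ℝ} (hc : Continuous f)
    (hp : ∀ θ, f (θ + 2 * π) = f θ) : ∃ C, ∀ θ, |f θ| ≤ C := by
  have hb := Function.Periodic.isBounded_of_continuous (f := f) (c := 2 * π) hp
    (by positivity) hc
  obtain ⟨C, hC⟩ := hb.exists_norm_le
  exact ⟨C, fun θ => hC _ (mem_range_self θ)⟩

/-! ### The maximum principle -/

/-- The light cone estimate, forward in time, for a system of transport equations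
`∂ₜ wⱼ - cⱼ ∂_θ wⱼ = O(1 + maxᵢ |wᵢ|)` on the circle. No characteristic curve is needed: at a
maximum of the weighted square `wⱼ² exp (-k (t - a))` the `θ`-derivative drops out, whatever the
speed `cⱼ`, and non-negativity of the one-sided time derivative forces `wⱼ² ≤ 1` there, unless the
maximum lies on the initial slice. -/
lemma transport_forward {ι : Type*} [Finite ι] {a b K M₀ : ℝ} (hab : a ≤ b) (hK : 0 ≤ K)
    {w wt wx c : ι → ℝ → ℝ → ℝ}
    (hcont : ∀ j, ContinuousOn (fun p : ℝ × ℝ => w j p.1 p.2) (Icc a b ×ˢ (univ : Set ℝ)))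
    (hper : ∀ j t θ, w j t (θ + 2 * π) = w j t θ)
    (hwt : ∀ j, ∀ t ∈ Icc a b, ∀ θ, HasDerivAt (fun s => w j s θ) (wt j t θ) t)
    (hwx : ∀ j, ∀ t ∈ Icc a b, ∀ θ, HasDerivAt (fun x => w j t x) (wx j t θ) θ)
    (hb : ∀ j, ∀ t ∈ Icc a b, ∀ θ M, (∀ i, |w i t θ| ≤ M) →
      |wt j t θ - c j t θ * wx j t θ| ≤ K * (1 + M))
    (hinit : ∀ j θ, (w j a θ) ^ 2 ≤ M₀) :
    ∀ j, ∀ t ∈ Icc a b, ∀ θ, (w j t θ) ^ 2 ≤ max 1 M₀ * exp ((4 * K + 1) * (b - a)) := by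
  intro j₀ t₀ ht₀ θ₀
  set k := 4 * K + 1 with hk
  have hk0 : 0 < k := by positivity
  let z : ι → ℝ × ℝ → ℝ := fun j p => (w j p.1 p.2) ^ 2 * exp (-(k * (p.1 - a)))
  have hzc : ∀ j, ContinuousOn (z j) (Icc a b ×ˢ Icc 0 (2 * π)) := by
    intro j
    refine ContinuousOn.mul (((hcont j).mono (prod_mono_right (subset_univ _))).pow 2) ?_
    exact Continuous.continuousOn (by fun_prop)
  have hex : ∀ j, ∃ p ∈ Icc a b ×ˢ Icc 0 (2 * π), IsMaxOn (z j) (Icc a b ×ˢ Icc 0 (2 * π)) p :=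
    fun j => (isCompact_Icc.prod isCompact_Icc).exists_isMaxOn
      ⟨(a, 0), ⟨⟨le_rfl, hab⟩, ⟨le_rfl, by positivity⟩⟩⟩ (hzc j)
  choose p hp hpmax using hex
  have : Nonempty ι := ⟨j₀⟩
  obtain ⟨j, hj⟩ := Finite.exists_max (fun j => z j (p j))
  obtain ⟨⟨τ, ξ⟩, hpj⟩ : ∃ q, q = p j := ⟨_, rfl⟩
  have hτ : τ ∈ Icc a b := by have := (hp j).1; rw [← hpj] at this; exact this
  -- By periodicity the chosen point maximises over the whole strip, not just one period.
  have hmax : ∀ i, ∀ t ∈ Icc a b, ∀ θ, z i (t, θ) ≤ z j (τ, ξ) := by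
    intro i t ht θ
    obtain ⟨x, hx, hxe⟩ := Function.Periodic.exists_mem_Ico₀ (f := fun x => z i (t, x))
      (c := 2 * π) (fun x => by simp only [z, hper]) (by positivity) θ
    rw [hpj]
    refine hxe.le.trans ?_
    exact (hpmax i ⟨ht, hx.1, hx.2.le⟩).trans (hj i)
  have hfin : z j (τ, ξ) ≤ max 1 M₀ := by
    have hexp1 : exp (-(k * (τ - a))) ≤ 1 :=
      exp_le_one_iff.2 (by have := mul_nonneg hk0.le (sub_nonneg.2 hτ.1); linarith)
    rcases eq_or_lt_of_le hτ.1 with h | h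
    · subst h
      simp only [z, sub_self, mul_zero, neg_zero, exp_zero, mul_one]
      exact (hinit j ξ).trans (le_max_right _ _)
    have hE := exp_pos (-(k * (τ - a)))
    have hx0 : w j τ ξ * wx j τ ξ = 0 := by
      have hd := ((hwx j τ hτ ξ).fun_pow 2)
      have hm : IsLocalMax (fun x => (w j τ x) ^ 2) ξ := by
        refine Eventually.of_forall fun x => ?_
        exact le_of_mul_le_mul_right (hmax j τ hτ x) hE
      have := hm.hasDerivAt_eq_zero hd
      simp only [Nat.cast_ofNat, Nat.add_one_sub_one, pow_one] at this
      linarith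
    -- Only times in `[a, τ]` are compared, as `τ` may be the endpoint `b`.
    have ht0 : 0 ≤ 2 * w j τ ξ * wt j τ ξ - k * (w j τ ξ) ^ 2 := by
      have hd1 : HasDerivAt (fun s => exp (-(k * (s - a))))
          (exp (-(k * (τ - a))) * (-(k * 1))) τ :=
        ((((hasDerivAt_id τ).sub_const a).const_mul k).fun_neg).exp
      have hd := ((hwt j τ hτ ξ).fun_pow 2).fun_mul hd1
      have hm : IsLocalMaxOn (fun s => (w j s ξ) ^ 2 * exp (-(k * (s - a)))) (Icc a τ) τ := by
        refine IsMaxOn.localize fun s hs => ?_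
        exact hmax j s ⟨hs.1, hs.2.trans hτ.2⟩ ξ
      have htan : a - τ ∈ posTangentConeAt (Icc a τ) τ := by
        apply sub_mem_posTangentConeAt_of_segment_subset
        rw [segment_symm, segment_eq_Icc hτ.1]
      have := hm.hasFDerivWithinAt_nonpos hd.hasFDerivAt.hasFDerivWithinAt htan
      simp at this
      have h2 : 0 ≤ exp (-(k * (τ - a))) * (2 * w j τ ξ * wt j τ ξ - k * (w j τ ξ) ^ 2) := by
        by_contra hneg
        push Not at hneg
        nlinarith
      exact nonneg_of_mul_nonneg_right h2 hE
    have hg := hb j τ hτ ξ |w j τ ξ| fun i => by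
      have := le_of_mul_le_mul_right (hmax i τ hτ ξ) hE
      exact sq_le_sq.1 this
    have h1 : w j τ ξ * wt j τ ξ ≤ |w j τ ξ| * (K * (1 + |w j τ ξ|)) := by
      calc w j τ ξ * wt j τ ξ = w j τ ξ * (wt j τ ξ - c j τ ξ * wx j τ ξ) := by
            linear_combination c j τ ξ * hx0
        _ ≤ |w j τ ξ * (wt j τ ξ - c j τ ξ * wx j τ ξ)| := le_abs_self _
        _ = |w j τ ξ| * |wt j τ ξ - c j τ ξ * wx j τ ξ| := abs_mul _ _
        _ ≤ _ := by gcongr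
    -- From `2|w| ≤ 1 + w²`: `0 ≤ K + 3Kw² - kw²`, and `k = 4K + 1`.
    have hw1 : (w j τ ξ) ^ 2 ≤ 1 := by
      have ha := sq_abs (w j τ ξ)
      have h3 : 0 ≤ K * (|w j τ ξ| - 1) ^ 2 := by positivity
      nlinarith
    calc z j (τ, ξ) ≤ 1 * 1 := by
          simp only [z]; gcongr
      _ ≤ max 1 M₀ := by simp
  have h0 := (hmax j₀ t₀ ht₀ θ₀).trans hfin
  have hE := exp_pos (k * (t₀ - a))
  calc (w j₀ t₀ θ₀) ^ 2 = z j₀ (t₀, θ₀) * exp (k * (t₀ - a)) := by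
        simp only [z]; rw [mul_assoc, ← exp_add]; simp
    _ ≤ max 1 M₀ * exp (k * (b - a)) := by
        gcongr
        exact ht₀.2

/-- Two-sided version of `transport_forward`; times before `ti` are reached by reversing time. -/
lemma transport_bounded {ι : Type*} [Finite ι] {Tm Tp ti K : ℝ} (hti : ti ∈ Ioo Tm Tp)
    (hK : 0 ≤ K) {w c : ι → ℝ → ℝ → ℝ}
    (hw : ∀ j, SmoothStrip Tm Tp (w j))
    (hper : ∀ j t θ, w j t (θ + 2 * π) = w j t θ)
    (hb : ∀ j, ∀ t ∈ Ioo Tm Tp, ∀ θ M, (∀ i, |w i t θ| ≤ M) →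
      |pt (w j) t θ - c j t θ * pth (w j) t θ| ≤ K * (1 + M)) :
    ∃ C, ∀ j, ∀ t ∈ Ioo Tm Tp, ∀ θ, |w j t θ| ≤ C := by
  have hini : ∀ j, ∃ C, ∀ θ, |w j ti θ| ≤ C := fun j =>
    exists_bound_of_periodic ((hw j).continuous_slice hti) (hper j ti)
  choose C₀ hC₀ using hini
  obtain ⟨C₁, hC₁⟩ := (Set.finite_range C₀).bddAbove
  have hinit : ∀ j θ, (w j ti θ) ^ 2 ≤ C₁ ^ 2 := fun j θ => by
    rw [← sq_abs]
    exact pow_le_pow_left₀ (abs_nonneg _) ((hC₀ j θ).trans (hC₁ (mem_range_self j))) 2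
  refine ⟨√(max 1 (C₁ ^ 2) * exp ((4 * K + 1) * (Tp - Tm))), fun j t ht θ => ?_⟩
  apply Real.abs_le_sqrt
  rcases le_total ti t with h | h
  · have hsub : Icc ti t ⊆ Ioo Tm Tp := fun s hs => ⟨hti.1.trans_le hs.1, hs.2.trans_lt ht.2⟩
    refine (transport_forward (wt := fun j => pt (w j)) (wx := fun j => pth (w j)) (c := c) h hK
      (fun j => (hw j).continuousOn.mono (prod_mono_left hsub)) hper
      (fun j s hs x => (hw j).hasDerivAt_pt (hsub hs) x)
      (fun j s hs x => (hw j).hasDerivAt_pth (hsub hs) x)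
      (fun j s hs => hb j s (hsub hs)) hinit j t ⟨h, le_rfl⟩ θ).trans ?_
    gcongr
    · exact ht.2.le
    · exact hti.1.le
  · have hsub : ∀ s ∈ Icc (-ti) (-t), -s ∈ Ioo Tm Tp := fun s hs =>
      ⟨by linarith [hs.2, ht.1], by linarith [hs.1, hti.2]⟩
    have := transport_forward (w := fun j s x => w j (-s) x)
      (wt := fun j s x => - pt (w j) (-s) x) (wx := fun j s x => pth (w j) (-s) x)
      (c := fun j s x => - c j (-s) x) (neg_le_neg h) hK
      (fun j => (hw j).continuousOn.comp (f := fun p : ℝ × ℝ => (-p.1, p.2))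
        (Continuous.continuousOn (by fun_prop)) fun p hq => ⟨hsub _ hq.1, mem_univ _⟩)
      (fun j s x => hper j (-s) x)
      (fun j s hs x => by
        simpa [Function.comp_def] using
          ((hw j).hasDerivAt_pt (hsub s hs) x).scomp s (hasDerivAt_neg s))
      (fun j s hs x => (hw j).hasDerivAt_pth (hsub s hs) x)
      (fun j s hs x M hM => by
        have h1 := hb j (-s) (hsub s hs) x M hM
        rw [← abs_neg] at h1
        convert h1 using 2
        ring)
      (fun j x => by simpa using hinit j x) j (-t) ⟨neg_le_neg h, le_rfl⟩ θ
    simp only [neg_neg] at this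
    refine this.trans ?_
    have hle : -t - -ti ≤ Tp - Tm := by linarith [hti.2, ht.1]
    gcongr

/-! ### Bounds on the strip -/

/-- `g` is dominated by a constant multiple of `N` on the strip `(Tm, Tp) × ℝ`. -/
def Dom (Tm Tp : ℝ) (N g : ℝ → ℝ → ℝ) : Prop :=
  ∃ K, 0 ≤ K ∧ ∀ t ∈ Ioo Tm Tp, ∀ θ, |g t θ| ≤ K * N t θ

/-- `g` is bounded on the strip. -/
abbrev Bd (Tm Tp : ℝ) (g : ℝ → ℝ → ℝ) : Prop := Dom Tm Tp (fun _ _ => 1) g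

section Dom

variable {Tm Tp : ℝ} {N g h : ℝ → ℝ → ℝ}

lemma Dom.congr (hg : Dom Tm Tp N g) (he : ∀ t ∈ Ioo Tm Tp, ∀ θ, h t θ = g t θ) :
    Dom Tm Tp N h := by
  obtain ⟨K, hK, hb⟩ := hg
  exact ⟨K, hK, fun t ht θ => by rw [he t ht θ]; exact hb t ht θ⟩

lemma Dom.add (hg : Dom Tm Tp N g) (hh : Dom Tm Tp N h) :
    Dom Tm Tp N (fun t θ => g t θ + h t θ) := by
  obtain ⟨K, hK, hb⟩ := hg
  obtain ⟨L, hL, hb'⟩ := hh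
  refine ⟨K + L, by positivity, fun t ht θ => (abs_add_le _ _).trans ?_⟩
  linarith [hb t ht θ, hb' t ht θ, add_mul K L (N t θ)]

lemma Dom.neg (hg : Dom Tm Tp N g) : Dom Tm Tp N (fun t θ => - g t θ) := by
  obtain ⟨K, hK, hb⟩ := hg
  exact ⟨K, hK, fun t ht θ => by rw [abs_neg]; exact hb t ht θ⟩

lemma Dom.sub (hg : Dom Tm Tp N g) (hh : Dom Tm Tp N h) :
    Dom Tm Tp N (fun t θ => g t θ - h t θ) :=
  (hg.add hh.neg).congr fun _ _ _ => sub_eq_add_neg _ _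

lemma Bd.mul (hg : Bd Tm Tp g) (hh : Dom Tm Tp N h) :
    Dom Tm Tp N (fun t θ => g t θ * h t θ) := by
  obtain ⟨K, hK, hb⟩ := hg
  obtain ⟨L, hL, hb'⟩ := hh
  refine ⟨K * L, by positivity, fun t ht θ => ?_⟩
  have h1 : |g t θ| ≤ K := by simpa using hb t ht θ
  rw [abs_mul, mul_assoc]
  exact mul_le_mul h1 (hb' t ht θ) (abs_nonneg _) hK

lemma Dom.mul_bd (hg : Dom Tm Tp N g) (hh : Bd Tm Tp h) :
    Dom Tm Tp N (fun t θ => g t θ * h t θ) :=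
  (Bd.mul hh hg).congr fun _ _ _ => mul_comm _ _

lemma Bd.of_le {C : ℝ} (hb : ∀ t ∈ Ioo Tm Tp, ∀ θ, |g t θ| ≤ C) : Bd Tm Tp g :=
  ⟨max C 0, le_max_right _ _, fun t ht θ => by
    rw [mul_one]; exact (hb t ht θ).trans (le_max_left _ _)⟩

lemma Bd.const (c : ℝ) : Bd Tm Tp (fun _ _ => c) := Bd.of_le fun _ _ _ => le_rfl

lemma Bd.pow_two (hg : Bd Tm Tp g) : Bd Tm Tp (fun t θ => g t θ ^ 2) :=
  (Bd.mul hg hg).congr fun _ _ _ => sq _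

lemma Bd.exp (hg : Bd Tm Tp g) : Bd Tm Tp (fun t θ => exp (g t θ)) := by
  obtain ⟨K, hK, hb⟩ := hg
  refine Bd.of_le (C := Real.exp K) fun t ht θ => ?_
  rw [abs_of_pos (exp_pos _)]
  have := (le_abs_self _).trans (hb t ht θ)
  exact exp_le_exp.2 (by simpa using this)

lemma Bd.dom (hN : ∀ t θ, 1 ≤ N t θ) (hg : Bd Tm Tp g) : Dom Tm Tp N g := by
  obtain ⟨K, hK, hb⟩ := hg
  refine ⟨K, hK, fun t ht θ => (hb t ht θ).trans ?_⟩
  have := hN t θ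
  gcongr

end Dom

/-- A bounded function whose time derivative exists and is dominated by `N` on the strip. The
class is closed under the operations from which the right-hand sides of the evolution equations
are built. -/
structure Good (Tm Tp : ℝ) (N g : ℝ → ℝ → ℝ) : Prop where
  bd : Bd Tm Tp g
  diff : ∀ t ∈ Ioo Tm Tp, ∀ θ, DifferentiableAt ℝ (fun s => g s θ) t
  dom : Dom Tm Tp N (pt g)

namespace Good

variable {Tm Tp : ℝ} {N g h : ℝ → ℝ → ℝ}

lemma mk_of_hasDerivAt {g' : ℝ → ℝ → ℝ} (hg : Bd Tm Tp g)
    (hd : ∀ t ∈ Ioo Tm Tp, ∀ θ, HasDerivAt (fun s => g s θ) (g' t θ) t)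
    (hg' : Dom Tm Tp N g') : Good Tm Tp N g :=
  ⟨hg, fun t ht θ => (hd t ht θ).differentiableAt, hg'.congr fun t ht θ => (hd t ht θ).deriv⟩

lemma of_smooth (hs : SmoothStrip Tm Tp g) (hg : Bd Tm Tp g) (hg' : Dom Tm Tp N (pt g)) :
    Good Tm Tp N g :=
  mk_of_hasDerivAt hg (fun _ ht θ => hs.hasDerivAt_pt ht θ) hg'

lemma hasDerivAt (hg : Good Tm Tp N g) : ∀ t ∈ Ioo Tm Tp, ∀ θ,
    HasDerivAt (fun s => g s θ) (pt g t θ) t :=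
  fun t ht θ => (hg.diff t ht θ).hasDerivAt

lemma congr (hg : Good Tm Tp N g) (he : ∀ t ∈ Ioo Tm Tp, ∀ θ, h t θ = g t θ) :
    Good Tm Tp N h := by
  refine mk_of_hasDerivAt (hg.bd.congr he) (fun t ht θ => ?_) hg.dom
  refine (hg.hasDerivAt t ht θ).congr_of_eventuallyEq ?_
  filter_upwards [isOpen_Ioo.mem_nhds ht] with s hs using he s hs θ

lemma const (hN : ∀ t θ, 1 ≤ N t θ) (c : ℝ) : Good Tm Tp N (fun _ _ => c) :=
  mk_of_hasDerivAt (Bd.const c) (fun t _ _ => hasDerivAt_const t c) ((Bd.const 0).dom hN)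

lemma add (hg : Good Tm Tp N g) (hh : Good Tm Tp N h) :
    Good Tm Tp N (fun t θ => g t θ + h t θ) :=
  mk_of_hasDerivAt (hg.bd.add hh.bd)
    (fun t ht θ => (hg.hasDerivAt t ht θ).fun_add (hh.hasDerivAt t ht θ)) (hg.dom.add hh.dom)

lemma neg (hg : Good Tm Tp N g) : Good Tm Tp N (fun t θ => - g t θ) :=
  mk_of_hasDerivAt hg.bd.neg (fun t ht θ => (hg.hasDerivAt t ht θ).fun_neg) hg.dom.neg

lemma sub (hg : Good Tm Tp N g) (hh : Good Tm Tp N h) :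
    Good Tm Tp N (fun t θ => g t θ - h t θ) :=
  mk_of_hasDerivAt (hg.bd.sub hh.bd)
    (fun t ht θ => (hg.hasDerivAt t ht θ).fun_sub (hh.hasDerivAt t ht θ)) (hg.dom.sub hh.dom)

lemma mul (hg : Good Tm Tp N g) (hh : Good Tm Tp N h) :
    Good Tm Tp N (fun t θ => g t θ * h t θ) :=
  mk_of_hasDerivAt (Bd.mul hg.bd hh.bd)
    (fun t ht θ => (hg.hasDerivAt t ht θ).fun_mul (hh.hasDerivAt t ht θ))
    ((hg.dom.mul_bd hh.bd).add (Bd.mul hg.bd hh.dom))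

lemma pow_two (hg : Good Tm Tp N g) : Good Tm Tp N (fun t θ => g t θ ^ 2) :=
  (hg.mul hg).congr fun _ _ _ => sq _

lemma exp (hg : Good Tm Tp N g) : Good Tm Tp N (fun t θ => exp (g t θ)) :=
  mk_of_hasDerivAt hg.bd.exp (fun t ht θ => (hg.hasDerivAt t ht θ).exp) (Bd.mul hg.bd.exp hg.dom)

lemma inv (hg : Good Tm Tp N g) (h0 : ∀ t ∈ Ioo Tm Tp, ∀ θ, g t θ ≠ 0)
    (hi : Bd Tm Tp (fun t θ => (g t θ)⁻¹)) : Good Tm Tp N (fun t θ => (g t θ)⁻¹) :=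
  mk_of_hasDerivAt hi (fun t ht θ => (hg.hasDerivAt t ht θ).fun_inv (h0 t ht θ))
    ((Bd.mul (Bd.mul hi hi) hg.dom.neg).congr fun t ht θ => by
      have := h0 t ht θ
      field_simp)

end Good

/-! ### Second-order estimate for systems of wave equations -/

/-- The sum `1 + ∑ (|f̈ᵢ| + |ḟᵢ'|)` of the second derivatives to be estimated. -/
def secondSum {ι : Type*} [Fintype ι] (f : ι → ℝ → ℝ → ℝ) (t θ : ℝ) : ℝ :=
  1 + ∑ i, (|pt (pt (f i)) t θ| + |pth (pt (f i)) t θ|)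

lemma one_le_secondSum {ι : Type*} [Fintype ι] (f : ι → ℝ → ℝ → ℝ) (t θ : ℝ) :
    1 ≤ secondSum f t θ :=
  le_add_of_nonneg_right (Finset.sum_nonneg fun _ _ => by positivity)

lemma dom_secondSum {ι : Type*} [Fintype ι] (f : ι → ℝ → ℝ → ℝ) (Tm Tp : ℝ) (i : ι) :
    Dom Tm Tp (secondSum f) (pt (pt (f i))) ∧ Dom Tm Tp (secondSum f) (pth (pt (f i))) := by
  have key : ∀ t θ, |pt (pt (f i)) t θ| + |pth (pt (f i)) t θ| ≤ secondSum f t θ := fun t θ =>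
    (Finset.single_le_sum (f := fun i => |pt (pt (f i)) t θ| + |pth (pt (f i)) t θ|)
      (fun _ _ => by positivity) (Finset.mem_univ i)).trans
      (le_add_of_nonneg_left zero_le_one)
  refine ⟨⟨1, zero_le_one, fun t _ θ => ?_⟩, ⟨1, zero_le_one, fun t _ θ => ?_⟩⟩ <;>
  linarith [key t θ, abs_nonneg (pt (pt (f i)) t θ), abs_nonneg (pth (pt (f i)) t θ)]

/-- The sign of a characteristic family. -/
def sgn (b : Bool) : ℝ := cond b 1 (-1)

lemma sgn_mul_self (b : Bool) : sgn b * sgn b = 1 := by cases b <;> simp [sgn]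

/-- Second-order light cone estimate. If the sources `f̈ᵢ - α fᵢ''` are bounded and their time
derivatives grow at most linearly in the second derivatives `f̈ᵢ`, `ḟᵢ'`, then these second
derivatives are bounded. -/
theorem wave_second_order {ι : Type*} [Fintype ι] {Tm Tp ti : ℝ} (hti : ti ∈ Ioo Tm Tp)
    {α : ℝ → ℝ → ℝ} {f : ι → ℝ → ℝ → ℝ}
    (hα : SmoothStrip Tm Tp α) (hf : ∀ i, SmoothStrip Tm Tp (f i))
    (pα : ∀ t θ, α t (θ + 2 * π) = α t θ) (pf : ∀ i t θ, f i t (θ + 2 * π) = f i t θ)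
    (α0 : ∀ t ∈ Ioo Tm Tp, ∀ θ, 0 < α t θ)
    (biα : Bd Tm Tp (fun t θ => (α t θ)⁻¹))
    (bαt : Bd Tm Tp (pt α)) (bαx : Bd Tm Tp (pth α))
    (hwave : ∀ i, Good Tm Tp (secondSum f)
      (fun t θ => pt (pt (f i)) t θ - α t θ * pth (pth (f i)) t θ)) :
    ∀ i, Bd Tm Tp (pt (pt (f i))) ∧ Bd Tm Tp (pth (pt (f i))) := by
  set N := secondSum f with hN
  have N1 : ∀ t θ, 1 ≤ N t θ := one_le_secondSum f
  -- The characteristic speeds are `±c`.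
  let c : ℝ → ℝ → ℝ := fun t θ => √(α t θ)
  have c0 : ∀ t ∈ Ioo Tm Tp, ∀ θ, 0 < c t θ := fun t ht θ => sqrt_pos.2 (α0 t ht θ)
  have cc : ∀ t ∈ Ioo Tm Tp, ∀ θ, c t θ * c t θ = α t θ := fun t ht θ =>
    mul_self_sqrt (α0 t ht θ).le
  have hc : SmoothStrip Tm Tp c :=
    ContDiffOn.sqrt hα fun p hp => (α0 p.1 hp.1 p.2).ne'
  have ct : ∀ t ∈ Ioo Tm Tp, ∀ θ, pt c t θ = pt α t θ / (2 * c t θ) := fun t ht θ =>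
    ((hα.hasDerivAt_pt ht θ).sqrt (α0 t ht θ).ne').deriv
  have cx : ∀ t ∈ Ioo Tm Tp, ∀ θ, pth c t θ = pth α t θ / (2 * c t θ) := fun t ht θ =>
    ((hα.hasDerivAt_pth ht θ).sqrt (α0 t ht θ).ne').deriv
  have bic : Bd Tm Tp (fun t θ => (c t θ)⁻¹) := by
    obtain ⟨K, hK, hb⟩ := biα
    refine Bd.of_le (C := √K) fun t ht θ => ?_
    have := (le_abs_self _).trans (hb t ht θ)
    rw [mul_one] at this
    rw [abs_of_pos (inv_pos.2 (c0 t ht θ)), ← Real.sqrt_inv]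
    exact Real.sqrt_le_sqrt this
  -- Differentiating the wave equation in time also produces `pt α * pth (pth (f i))`; its second
  -- factor is eliminated through the wave equation itself.
  have hsrc : ∀ i, Dom Tm Tp N
      (fun t θ => pt (pt (pt (f i))) t θ - α t θ * pth (pth (pt (f i))) t θ) := by
    intro i
    have hxx : Dom Tm Tp N (pth (pth (f i))) :=
      (Bd.mul biα ((dom_secondSum f Tm Tp i).1.sub ((hwave i).bd.dom N1))).congr fun t ht θ => by
        have := (α0 t ht θ).ne'
        field_simp
        ring
    refine ((hwave i).dom.add (Bd.mul bαt hxx)).congr fun t ht θ => ?_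
    have hd : HasDerivAt (fun s => pt (pt (f i)) s θ - α s θ * pth (pth (f i)) s θ) _ t :=
      ((hf i).pt.pt.hasDerivAt_pt ht θ).fun_sub
        ((hα.hasDerivAt_pt ht θ).fun_mul ((hf i).pth.pth.hasDerivAt_pt ht θ))
    have he : pt (fun t θ => pt (pt (f i)) t θ - α t θ * pth (pth (f i)) t θ) t θ = _ := hd.deriv
    rw [he, (hf i).pt_pth_pth ht]
    ring
  -- The characteristic derivatives of `ḟᵢ`; they obey transport equations with speeds `±c`.
  let w : ι × Bool → ℝ → ℝ → ℝ := fun j t θ =>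
    pt (pt (f j.1)) t θ + sgn j.2 * (c t θ * pth (pt (f j.1)) t θ)
  have hw : ∀ j, SmoothStrip Tm Tp (w j) := fun j =>
    ContDiffOn.add (hf j.1).pt.pt (contDiffOn_const.mul (ContDiffOn.mul hc (hf j.1).pt.pth))
  obtain ⟨L, hL, hLb⟩ := bic
  have hrec : ∀ t ∈ Ioo Tm Tp, ∀ θ M, (∀ j, |w j t θ| ≤ M) → ∀ i,
      |pt (pt (f i)) t θ| ≤ M ∧ |pth (pt (f i)) t θ| ≤ L * M := by
    intro t ht θ M hM i
    have h1 := hM (i, true)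
    have h2 := hM (i, false)
    simp only [w, sgn, cond_true, cond_false] at h1 h2
    rw [abs_le] at h1 h2
    have h3 : |pt (pt (f i)) t θ| ≤ M := abs_le.2 ⟨by linarith, by linarith⟩
    have h4 : |c t θ * pth (pt (f i)) t θ| ≤ M := abs_le.2 ⟨by linarith, by linarith⟩
    refine ⟨h3, ?_⟩
    have hl : |(c t θ)⁻¹| ≤ L := by simpa using hLb t ht θ
    have : pth (pt (f i)) t θ = (c t θ)⁻¹ * (c t θ * pth (pt (f i)) t θ) := by
      rw [← mul_assoc, inv_mul_cancel₀ (c0 t ht θ).ne', one_mul]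
    rw [this, abs_mul]
    exact mul_le_mul hl h4 (abs_nonneg _) hL
  have hrhs : ∀ j : ι × Bool, Dom Tm Tp N
      (fun t θ => pt (w j) t θ - (sgn j.2 * c t θ) * pth (w j) t θ) := by
    rintro ⟨i, b⟩
    have bc : Dom Tm Tp N (fun t θ => (sgn b * (pt α t θ * (c t θ)⁻¹) * (1 / 2)
        - pth α t θ * (1 / 2)) * pth (pt (f i)) t θ) :=
      Bd.mul ((((Bd.const (sgn b)).mul (Bd.mul bαt ⟨L, hL, hLb⟩)).mul_bd (Bd.const _)).sub
        (bαx.mul_bd (Bd.const _))) (dom_secondSum f Tm Tp i).2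
    refine ((hsrc i).add bc).congr fun t ht θ => ?_
    have hdt : HasDerivAt (fun s => w (i, b) s θ) _ t :=
      ((hf i).pt.pt.hasDerivAt_pt ht θ).fun_add
        (((hc.hasDerivAt_pt ht θ).fun_mul ((hf i).pt.pth.hasDerivAt_pt ht θ)).const_mul (sgn b))
    have hdx : HasDerivAt (fun x => w (i, b) t x) _ θ :=
      ((hf i).pt.pt.hasDerivAt_pth ht θ).fun_add
        (((hc.hasDerivAt_pth ht θ).fun_mul ((hf i).pt.pth.hasDerivAt_pth ht θ)).const_mul (sgn b))
    have et : pt (w (i, b)) t θ = _ := hdt.deriv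
    have ex : pth (w (i, b)) t θ = _ := hdx.deriv
    rw [et, ex, (hf i).pt.pt_pth ht, ct t ht, cx t ht, ← cc t ht θ]
    have hcne := (c0 t ht θ).ne'
    have hs := sgn_mul_self b
    field_simp
    linear_combination (-(2 * c t θ ^ 3 * pth (pth (pt (f i))) t θ)
      - c t θ * pth α t θ * pth (pt (f i)) t θ) * hs
  choose K hK hKb using hrhs
  obtain ⟨K', hK'⟩ := (Set.finite_range K).bddAbove
  have hn : (0 : ℝ) ≤ Fintype.card ι := Nat.cast_nonneg _
  obtain ⟨C, hC⟩ := transport_bounded (K := max K' 0 * (1 + Fintype.card ι * (1 + L))) hti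
    (by positivity) (w := w) (c := fun j t θ => sgn j.2 * c t θ) hw
    (fun j t θ => by
      simp only [w, c, pt_periodic (pt_periodic (pf j.1)), pth_periodic (pt_periodic (pf j.1)), pα])
    (fun j t ht θ M hM => by
      have hM0 : 0 ≤ M := (abs_nonneg _).trans (hM j)
      have hr := hrec t ht θ M hM
      have hNle : N t θ ≤ 1 + Fintype.card ι * ((1 + L) * M) := by
        have : ∑ i, (|pt (pt (f i)) t θ| + |pth (pt (f i)) t θ|)
            ≤ ∑ _i : ι, (1 + L) * M :=
          Finset.sum_le_sum fun i _ => by linarith [(hr i).1, (hr i).2]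
        rw [Finset.sum_const, Finset.card_univ, nsmul_eq_mul] at this
        simpa [hN, secondSum] using this
      have hKle : K j ≤ max K' 0 := (hK' (mem_range_self j)).trans (le_max_left _ _)
      have hK0 : 0 ≤ max K' 0 := le_max_right _ _
      have hN0 : 0 ≤ N t θ := zero_le_one.trans (N1 t θ)
      calc _ ≤ K j * N t θ := hKb j t ht θ
        _ ≤ max K' 0 * N t θ := by gcongr
        _ ≤ max K' 0 * ((1 + Fintype.card ι * (1 + L)) * (1 + M)) := by
            gcongr
            have h1 : 0 ≤ Fintype.card ι * (1 + L) := by positivity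
            nlinarith
        _ = _ := by ring)
  intro i
  exact ⟨Bd.of_le fun t ht θ => (hrec t ht θ C (fun j => hC j t ht θ) i).1,
    Bd.of_le fun t ht θ => (hrec t ht θ C (fun j => hC j t ht θ) i).2⟩

/-! ### Application to the Gowdy system -/

/-- `(α⁻¹)˙ = tQ²e^{2λφ+2(η−U)}` is bounded, hence `α` is bounded away from zero. -/
lemma GowdySolution.inv_alpha_bd {Q lam Tm Tp ti : ℝ} (hti : ti ∈ Ioo Tm Tp)
    (G : GowdySolution Q lam Tm Tp)
    (hη : Bd Tm Tp G.η) (hU : Bd Tm Tp G.U) (hφ : Bd Tm Tp G.φ) (ht : Bd Tm Tp (fun t _ => t)) :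
    Bd Tm Tp (fun t θ => (G.α t θ)⁻¹) := by
  have hα : SmoothStrip Tm Tp G.α := G.smooth _ (by simp)
  have pα := G.periodic G.α (by simp)
  have α0 := G.sys.alpha_pos
  have hb : Bd Tm Tp (fun t θ => t * Q ^ 2 *
      exp (2 * lam * G.φ t θ + 2 * (G.η t θ - G.U t θ))) :=
    Bd.mul (ht.mul_bd (Bd.const _))
      (Bd.exp (((Bd.const (2 * lam)).mul hφ).add ((Bd.const 2).mul (hη.sub hU))))
  obtain ⟨K, hK, hKb⟩ := hb
  obtain ⟨C, hC⟩ := exists_bound_of_periodic (f := fun x => (G.α ti x)⁻¹)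
    ((hα.continuous_slice hti).inv₀ fun x => (α0 ti hti x).ne') (fun x => by simp only [pα])
  refine Bd.of_le (C := C + K * (Tp - Tm)) fun t ht θ => ?_
  have hmv := (convex_Ioo Tm Tp).norm_image_sub_le_of_norm_hasDerivWithin_le
    (f := fun s => (G.α s θ)⁻¹) (C := K)
    (fun s hs => ((hα.hasDerivAt_pt hs θ).fun_inv (α0 s hs θ).ne').hasDerivWithinAt)
    (fun s hs => by
      have h1 := hKb s hs θ
      rw [mul_one] at h1
      rw [G.sys.constraint_α s hs θ, Real.norm_eq_abs]
      have hne := (α0 s hs θ).ne'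
      convert h1 using 2
      field_simp) hti ht
  simp only [Real.norm_eq_abs] at hmv
  have h2 : |t - ti| ≤ Tp - Tm := abs_le.2
    ⟨by linarith [ht.1, hti.2], by linarith [ht.2, hti.1]⟩
  have h3 : K * |t - ti| ≤ K * (Tp - Tm) := by gcongr
  have h4 := hC θ
  have h5 := abs_sub_abs_le_abs_sub ((G.α t θ)⁻¹) ((G.α ti θ)⁻¹)
  linarith

theorem second_light_cone_estimate (Q lam Tm Tp t_i : ℝ) (hQ : Q ≠ 0) (hTm : 0 < Tm) (hti : Tm < t_i)
    (hTp : t_i < Tp) (G : GowdySolution Q lam Tm Tp)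
    (hbd : ∃ C : ℝ,
      (∀ f ∈ ([G.η, G.α, G.U, G.A, G.φ, G.σ] : List (ℝ → ℝ → ℝ)),
        ∀ g ∈ ([f, pt f, pth f] : List (ℝ → ℝ → ℝ)),
          ∀ t ∈ Ioo Tm Tp, ∀ θ : ℝ, |g t θ| ≤ C)
      ∧ (∀ t ∈ Ioo Tm Tp, ∀ θ : ℝ,
          |pth (pt G.α) t θ| ≤ C ∧ |pt (pt G.α) t θ| ≤ C)) :
    ∃ C : ℝ, ∀ t ∈ Ioo Tm Tp, ∀ θ : ℝ,
      |calE2 lam G.α G.U G.A G.φ G.σ t θ| ≤ C := by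
  have hmem : t_i ∈ Ioo Tm Tp := ⟨hti, hTp⟩
  obtain ⟨C, hC, hCα⟩ := hbd
  have b0 : ∀ f ∈ ([G.η, G.α, G.U, G.A, G.φ, G.σ] : List (ℝ → ℝ → ℝ)), Bd Tm Tp f :=
    fun f hf => Bd.of_le (hC f hf f (by simp))
  have bt : ∀ f ∈ ([G.η, G.α, G.U, G.A, G.φ, G.σ] : List (ℝ → ℝ → ℝ)), Bd Tm Tp (pt f) :=
    fun f hf => Bd.of_le (hC f hf (pt f) (by simp))
  have bx : ∀ f ∈ ([G.η, G.α, G.U, G.A, G.φ, G.σ] : List (ℝ → ℝ → ℝ)), Bd Tm Tp (pth f) :=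
    fun f hf => Bd.of_le (hC f hf (pth f) (by simp))
  have bαtx : Bd Tm Tp (pth (pt G.α)) := Bd.of_le fun t ht θ => (hCα t ht θ).1
  have bαtt : Bd Tm Tp (pt (pt G.α)) := Bd.of_le fun t ht θ => (hCα t ht θ).2
  have btime : Bd Tm Tp (fun t _ => t) := Bd.of_le (C := Tp) fun t ht _ => by
    rw [abs_of_pos (hTm.trans ht.1)]; exact ht.2.le
  have time0 : ∀ t ∈ Ioo Tm Tp, ∀ _θ : ℝ, t ≠ 0 := fun t ht _ => (hTm.trans ht.1).ne'
  have bitime : Bd Tm Tp (fun t _ => t⁻¹) := Bd.of_le (C := Tm⁻¹) fun t ht _ => by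
    rw [abs_of_pos (inv_pos.2 (hTm.trans ht.1))]
    exact inv_anti₀ hTm ht.1.le
  have α0 := G.sys.alpha_pos
  have biα := G.inv_alpha_bd hmem (b0 _ (by simp)) (b0 _ (by simp)) (b0 _ (by simp)) btime
  let f : Fin 4 → ℝ → ℝ → ℝ := ![G.U, G.A, G.φ, G.σ]
  have fmem : ∀ i, f i ∈ ([G.η, G.α, G.U, G.A, G.φ, G.σ] : List (ℝ → ℝ → ℝ)) := by
    intro i; fin_cases i <;> simp [f]
  have N1 := one_le_secondSum f
  have sm : ∀ g ∈ ([G.η, G.α, G.U, G.A, G.φ, G.σ] : List (ℝ → ℝ → ℝ)), SmoothStrip Tm Tp g :=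
    G.smooth
  -- All constituents of the right-hand sides of the evolution equations are `Good`; for the first
  -- derivatives of `α` this is the assumed bound on the mixed and second time derivatives.
  have g0 : ∀ g ∈ ([G.η, G.α, G.U, G.A, G.φ, G.σ] : List (ℝ → ℝ → ℝ)),
      Good Tm Tp (secondSum f) g := fun g hg =>
    Good.of_smooth (sm g hg) (b0 g hg) ((bt g hg).dom N1)
  have gt : ∀ i, Good Tm Tp (secondSum f) (pt (f i)) := fun i =>
    Good.of_smooth (sm _ (fmem i)).pt (bt _ (fmem i)) (dom_secondSum f Tm Tp i).1
  have gx : ∀ i, Good Tm Tp (secondSum f) (pth (f i)) := fun i =>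
    Good.of_smooth (sm _ (fmem i)).pth (bx _ (fmem i))
      ((dom_secondSum f Tm Tp i).2.congr fun t ht θ => (sm _ (fmem i)).pt_pth ht θ)
  have hα : SmoothStrip Tm Tp G.α := sm _ (by simp)
  have gαt : Good Tm Tp (secondSum f) (pt G.α) :=
    Good.of_smooth hα.pt (bt _ (by simp)) (bαtt.dom N1)
  have gαx : Good Tm Tp (secondSum f) (pth G.α) :=
    Good.of_smooth hα.pth (bx _ (by simp)) ((bαtx.dom N1).congr fun t ht θ => hα.pt_pth ht θ)
  have gη := g0 G.η (by simp)
  have gα := g0 G.α (by simp)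
  have gU := g0 G.U (by simp)
  have gφ := g0 G.φ (by simp)
  have giα := gα.inv (fun t ht θ => (α0 t ht θ).ne') biα
  have gtime : Good Tm Tp (secondSum f) (fun t _ => t) :=
    Good.mk_of_hasDerivAt btime (fun t _ _ => hasDerivAt_id t) ((Bd.const 1).dom N1)
  have gitime := gtime.inv time0 bitime
  have gc : ∀ c : ℝ, Good Tm Tp (secondSum f) (fun _ _ => c) := Good.const N1
  have gUt : Good Tm Tp (secondSum f) (pt G.U) := gt 0
  have gAt : Good Tm Tp (secondSum f) (pt G.A) := gt 1
  have gφt : Good Tm Tp (secondSum f) (pt G.φ) := gt 2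
  have gσt : Good Tm Tp (secondSum f) (pt G.σ) := gt 3
  have gUx : Good Tm Tp (secondSum f) (pth G.U) := gx 0
  have gAx : Good Tm Tp (secondSum f) (pth G.A) := gx 1
  have gφx : Good Tm Tp (secondSum f) (pth G.φ) := gx 2
  have gσx : Good Tm Tp (secondSum f) (pth G.σ) := gx 3
  have ge := (((gc (2 * lam)).mul gφ).add ((gc 2).mul (gη.sub gU))).exp
  have gU4 := ((gc 4).mul gU).exp
  have gφ2 := ((gc (2 * lam)).mul gφ).exp
  -- The two terms with derivatives of `α`, common to all four right-hand sides.
  have glin : ∀ i, Good Tm Tp (secondSum f) (fun t θ =>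
      pt G.α t θ * pt (f i) t θ * (1 / 2 * (G.α t θ)⁻¹) + pth G.α t θ * pth (f i) t θ * (1 / 2)) :=
    fun i => ((gαt.mul (gt i)).mul ((gc (1 / 2)).mul giα)).add ((gαx.mul (gx i)).mul (gc (1 / 2)))
  have hwave : ∀ i, Good Tm Tp (secondSum f)
      (fun t θ => pt (pt (f i)) t θ - G.α t θ * pth (pth (f i)) t θ) := by
    intro i
    fin_cases i
    · refine (((((gUt.mul gitime).neg.add (glin 0)).add (((gU4.mul (gc (1 / 2))).mul
        gitime.pow_two).mul (gAt.pow_two.sub (gα.mul gAx.pow_two)))).add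
        (((gα.mul (gc (1 / 4))).mul (gc (Q ^ 2))).mul ge))).congr fun t ht θ => ?_
      refine (G.sys.evol_U t ht θ).trans ?_
      have h1 := (α0 t ht θ).ne'
      have h2 := time0 t ht θ
      simp only [f, Matrix.cons_val]
      field_simp
      ring
    · refine (((gAt.mul gitime).add (glin 1)).sub ((gc 4).mul ((gAt.mul gUt).sub
        ((gα.mul gAx).mul gUx)))).congr fun t ht θ => ?_
      refine (G.sys.evol_A t ht θ).trans ?_
      have h1 := (α0 t ht θ).ne'
      have h2 := time0 t ht θ
      simp only [f, Matrix.cons_val]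
      field_simp
      ring
    · refine (((((gφt.mul gitime).neg.add (glin 2)).add (((gc lam).mul gφ2).mul
        (gσt.pow_two.sub (gα.mul gσx.pow_two)))).sub
        ((((gc lam).mul gα).mul (gc (Q ^ 2))).mul ge))).congr fun t ht θ => ?_
      refine (G.sys.evol_φ t ht θ).trans ?_
      have h1 := (α0 t ht θ).ne'
      have h2 := time0 t ht θ
      simp only [f, Matrix.cons_val]
      field_simp
      ring
    · refine (((gσt.mul gitime).neg.add (glin 3)).sub ((gc (2 * lam)).mul ((gφt.mul gσt).sub
        ((gα.mul gφx).mul gσx)))).congr fun t ht θ => ?_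
      refine (G.sys.evol_σ t ht θ).trans ?_
      have h1 := (α0 t ht θ).ne'
      have h2 := time0 t ht θ
      simp only [f, Matrix.cons_val]
      field_simp
      ring
  have key := wave_second_order hmem hα (fun i => sm _ (fmem i)) (G.periodic _ (by simp))
    (fun i => G.periodic _ (fmem i)) α0 biα gαt.bd gαx.bd hwave
  have blk : ∀ i, Bd Tm Tp (fun t θ => pt (pt (f i)) t θ ^ 2 +
      G.α t θ * pth (pt (f i)) t θ ^ 2) := fun i =>
    (key i).1.pow_two.add (Bd.mul gα.bd (key i).2.pow_two)
  have hfin := ((blk 0).add (Bd.mul ((gU4.bd.mul_bd (Bd.const (1 / 4))).mul_bd bitime.pow_two)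
    (blk 1))).add ((Bd.const (1 / 4)).mul ((blk 2).add (Bd.mul gφ2.bd (blk 3))))
  obtain ⟨K, -, hK⟩ := hfin
  refine ⟨K, fun t ht θ => ?_⟩
  have h := hK t ht θ
  rw [mul_one] at h
  convert h using 2
  have h2 := time0 t ht θ
  simp only [calE2, f, Matrix.cons_val]
  field_simp

end
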